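/- arXiv:1803.00606 — 5 statements merged into one kernel-verified Lean document; each statement's English description precedes it below -/
import Mathlib

section
/- (Performance difference lemma.) In a finite-horizon MDP, for every nonstationary deterministic policy π and every initial state s₁, the suboptimality of π satisfies the exact identity V*_1(s₁) − V^π_1(s₁) = Σ_{h=1}^{H} Σ_{s ∈ S} d^{π,s₁}_h(s) · ( V*_h(s) − Q*_h(s, π_h(s)) ), i.e., the suboptimality equals the expected sum over time steps of the per-state action gaps V*_h(s_h) − Q*_h(s_h, π_h(s_h)) along trajectories generated by following π from s₁. -/
open Finset

/-!
Let `W h = V h - Vpol h`. Both `Q h s (π h s)` and `Vpol h s` are the immediate reward plus an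
expected continuation value under the same transition, so the rewards cancel in
`Q h s (π h s) - Vpol h s`, which is therefore the expectation of `W (h + 1)` at the next state.
Hence the action gap `V h s - Q h s (π h s)` is the expected one-step decrease of `W`, and these
decreases telescope along the trajectory.
-/

section Expectation

variable {S : Type*} [Fintype S]

/-- The expectation of `f` under the probability mass function `p`. On a finite type this is written
as a weighted sum, which needs no measurable structure on `S`. -/
noncomputable def pmfExpectation (p : PMF S) (f : S → ℝ) : ℝ :=
  ∑ s, (p s).toReal * f s

lemma pmfExpectation_pure (s : S) (f : S → ℝ) : pmfExpectation (PMF.pure s) f = f s := by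
  classical
  simp [pmfExpectation, PMF.pure_apply, apply_ite ENNReal.toReal]

lemma pmfExpectation_sub (p : PMF S) (f g : S → ℝ) :
    pmfExpectation p (fun s => f s - g s) = pmfExpectation p f - pmfExpectation p g := by
  simp only [pmfExpectation, mul_sub, sum_sub_distrib]

lemma toReal_pmf_bind_apply {T : Type*} (p : PMF S) (K : S → PMF T) (t : T) :
    (p.bind K t).toReal = pmfExpectation p fun s => (K s t).toReal := by
  rw [PMF.bind_apply, tsum_fintype, ENNReal.toReal_sum fun s _ =>
    ENNReal.mul_ne_top (p.apply_ne_top s) ((K s).apply_ne_top t)]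
  simp only [pmfExpectation, ENNReal.toReal_mul]

lemma pmfExpectation_bind {T : Type*} [Fintype T] (p : PMF S) (K : S → PMF T) (f : T → ℝ) :
    pmfExpectation (p.bind K) f = pmfExpectation p fun s => pmfExpectation (K s) f := by
  calc ∑ t, (p.bind K t).toReal * f t
      = ∑ t, ∑ s, (p s).toReal * ((K s t).toReal * f t) := by
        simp only [toReal_pmf_bind_apply, pmfExpectation, sum_mul, mul_assoc]
    _ = ∑ s, ∑ t, (p s).toReal * ((K s t).toReal * f t) := sum_comm
    _ = ∑ s, (p s).toReal * ∑ t, (K s t).toReal * f t := by simp only [mul_sum]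

/-- Dynkin's formula for a time-inhomogeneous Markov chain. -/
lemma sum_Ico_pmfExpectation_decrease {m n : ℕ} (hmn : m ≤ n) (d : ℕ → PMF S)
    (K : ℕ → S → PMF S) (hd : ∀ h ∈ Ico m n, d (h + 1) = (d h).bind (K h)) (W : ℕ → S → ℝ) :
    ∑ h ∈ Ico m n, pmfExpectation (d h) (fun s => W h s - pmfExpectation (K h s) (W (h + 1))) =
      pmfExpectation (d m) (W m) - pmfExpectation (d n) (W n) := by
  have decrease_eq : ∀ h ∈ Ico m n,
      pmfExpectation (d h) (fun s => W h s - pmfExpectation (K h s) (W (h + 1))) =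
        pmfExpectation (d h) (W h) - pmfExpectation (d (h + 1)) (W (h + 1)) := fun h hh => by
    rw [pmfExpectation_sub, hd h hh, pmfExpectation_bind]
  rw [sum_congr rfl decrease_eq, ← neg_inj, ← sum_neg_distrib]
  simp only [neg_sub]
  exact sum_Ico_sub (fun h => pmfExpectation (d h) (W h)) hmn

end Expectation

/-- For `V` the value function of a second policy, this compares the performance of two policies. -/
theorem performance_difference_lemma_general {S A : Type*} [Fintype S]
    (P : ℕ → S → A → PMF S) (r : ℕ → S → A → ℝ) (H : ℕ) (π : ℕ → S → A)
    (Vpol V : ℕ → S → ℝ) (Q : ℕ → S → A → ℝ)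
    (hVpol : ∀ h, 1 ≤ h → h ≤ H → ∀ s,
      Vpol h s = r h s (π h s) + pmfExpectation (P h s (π h s)) (Vpol (h + 1)))
    (hQ : ∀ h, 1 ≤ h → h ≤ H → ∀ s a,
      Q h s a = r h s a + pmfExpectation (P h s a) (V (h + 1)))
    (hTop : ∀ s, V (H + 1) s = Vpol (H + 1) s)
    (d : ℕ → PMF S)
    (hd : ∀ h, 1 ≤ h → h ≤ H → d (h + 1) = (d h).bind fun s => P h s (π h s)) :
    pmfExpectation (d 1) (fun s => V 1 s - Vpol 1 s) =
      ∑ h ∈ Icc 1 H, pmfExpectation (d h) fun s => V h s - Q h s (π h s) := by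
  let W : ℕ → S → ℝ := fun h s => V h s - Vpol h s
  let K : ℕ → S → PMF S := fun h s => P h s (π h s)
  have gap_eq : ∀ h ∈ Icc 1 H, ∀ s,
      V h s - Q h s (π h s) = W h s - pmfExpectation (K h s) (W (h + 1)) := fun h hh s => by
    obtain ⟨one_le, le_H⟩ := mem_Icc.mp hh
    rw [pmfExpectation_sub, hQ h one_le le_H]
    simp only [W, K, hVpol h one_le le_H]
    ring
  have terminal_eq_zero : pmfExpectation (d (H + 1)) (W (H + 1)) = 0 := by
    simp [pmfExpectation, W, hTop]
  have hd_Ico : ∀ h ∈ Ico 1 (H + 1), d (h + 1) = (d h).bind (K h) := fun h hh =>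
    hd h (mem_Ico.mp hh).1 (Nat.le_of_lt_succ (mem_Ico.mp hh).2)
  calc pmfExpectation (d 1) (W 1)
      = pmfExpectation (d 1) (W 1) - pmfExpectation (d (H + 1)) (W (H + 1)) := by
        rw [terminal_eq_zero, sub_zero]
    _ = ∑ h ∈ Icc 1 H,
          pmfExpectation (d h) (fun s => W h s - pmfExpectation (K h s) (W (h + 1))) := by
        rw [← sum_Ico_pmfExpectation_decrease (Nat.le_add_left 1 H) d K hd_Ico W,
          Ico_add_one_right_eq_Icc]
    _ = ∑ h ∈ Icc 1 H, pmfExpectation (d h) fun s => V h s - Q h s (π h s) :=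
        sum_congr rfl fun h hh => by simp only [gap_eq h hh]

/-- **Performance difference lemma** for a finite-horizon MDP.  `Vpol h s` is
the value of the nonstationary deterministic policy `π` at step `h`;
`Vstar`/`Qstar` are the optimal value/action-value functions, and `d h` is the
state-occupancy distribution at step `h` of the trajectory generated by
following `π` from initial state `s₁`.  The suboptimality of `π` from `s₁`
equals the expected sum over time steps of the per-state action gaps
`V*_h(s) − Q*_h(s, π_h(s))`. -/
theorem performance_difference_lemma
    {S A : Type} [Fintype S] [Fintype A] [Nonempty A]
    (P : S → A → PMF S) (r : S → A → ℝ) (H : ℕ)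
    (π : ℕ → S → A)
    (Vpol : ℕ → S → ℝ)
    (hVpolTop : ∀ s : S, Vpol (H + 1) s = 0)
    (hVpolRec : ∀ h : ℕ, 1 ≤ h → h ≤ H → ∀ s : S,
      Vpol h s = r s (π h s) + ∑ s' : S, (P s (π h s) s').toReal * Vpol (h + 1) s')
    (Vstar : ℕ → S → ℝ) (Qstar : ℕ → S → A → ℝ)
    (hVstarTop : ∀ s : S, Vstar (H + 1) s = 0)
    (hQstar : ∀ h : ℕ, 1 ≤ h → h ≤ H → ∀ (s : S) (a : A),
      Qstar h s a = r s a + ∑ s' : S, (P s a s').toReal * Vstar (h + 1) s')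
    (hVstar : ∀ h : ℕ, 1 ≤ h → h ≤ H → ∀ s : S,
      Vstar h s = Finset.univ.sup' Finset.univ_nonempty (fun a : A => Qstar h s a))
    (s₁ : S)
    (d : ℕ → PMF S)
    (hd1 : d 1 = PMF.pure s₁)
    (hdRec : ∀ h : ℕ, 1 ≤ h → h ≤ H → d (h + 1) = (d h).bind fun s => P s (π h s)) :
    Vstar 1 s₁ - Vpol 1 s₁
      = ∑ h ∈ Finset.Icc 1 H, ∑ s : S,
          (d h s).toReal * (Vstar h s - Qstar h s (π h s)) := by
  rw [← pmfExpectation_pure s₁ fun s => Vstar 1 s - Vpol 1 s, ← hd1]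
  exact performance_difference_lemma_general (fun _ => P) (fun _ => r) H π Vpol Vstar Qstar
    hVpolRec hQstar (fun s => (hVstarTop s).trans (hVpolTop s).symm) d hdRec
end

section
/- (Suboptimality via learned states and escape probability.) Consider a finite-horizon MDP with nonnegative expected rewards (r(s,a) ≥ 0 for all s,a) whose optimal values are bounded by one (V*_h(s) ≤ 1 for all h, s). Let π be a nonstationary deterministic policy, let G_1, …, G_H ⊆ S be sets of 'learned' states, and let ε_1, …, ε_H ≥ 0 be such that for every h and every s ∈ G_h one has V*_h(s) − Q*_h(s, π_h(s)) ≤ ε_h. Let p denote the probability, under the trajectory distribution in which s_1 = s₁ and s_{h+1} ∼ P(s_h, π_h(s_h)) for h = 1,…,H−1, of the event that s_h ∉ G_h for some h ∈ {1,…,H}. Then V*_1(s₁) − V^π_1(s₁) ≤ p + Σ_{h=1}^{H} ε_h. -/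
open Finset

/-- The distribution over state trajectories generated by following the
nonstationary deterministic policy `π` in the MDP with transition kernel `P`:
`traj P π t h s` is the distribution of the list `[s_h, s_{h+1}, …, s_{h+t}]`
of the next `t+1` states when `s_h = s` and `s_{k+1} ∼ P(s_k, π_k(s_k))`. -/
noncomputable def traj {S A : Type} (P : S → A → PMF S) (π : ℕ → S → A) :
    ℕ → ℕ → S → PMF (List S)
  | 0, _, s => PMF.pure [s]
  | t + 1, h, s =>
      (P s (π h s)).bind fun s' => (traj P π t (h + 1) s').map fun l => s :: l

/-!
Compare `V*` with `V^π` by backward induction on the stage. Outside `G_h` the trajectory has escaped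
with probability one, and `V*_h - V^π_h ≤ 1` because `V*_h ≤ 1` and `V^π_h ≥ 0`. On `G_h` the
difference is at most `ε_h` plus its mean over the next state, and the escape probability from `s`
is exactly the mean of the escape probability from the next state. The argument compares `V^π` with
any function `U` in place of `V*` whose one-step gaps along `π` are controlled on the sets `G_h`.
-/

theorem hasSum_toReal_pmf {α : Type*} (q : PMF α) : HasSum (fun a => (q a).toReal) 1 := by
  have hsum := ENNReal.hasSum_toReal q.tsum_coe_ne_top
  rwa [← ENNReal.tsum_toReal_eq q.apply_ne_top, q.tsum_coe, ENNReal.toReal_one] at hsum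

theorem hasSum_toReal_pmf_mul_add_const {α : Type*} {q : PMF α} {f : α → ℝ} {x : ℝ}
    (hf : HasSum (fun a => (q a).toReal * f a) x) (c : ℝ) :
    HasSum (fun a => (q a).toReal * (f a + c)) (x + c) := by
  simpa only [mul_add, one_mul] using hf.add ((hasSum_toReal_pmf q).mul_right c)

section Escape

variable {S A : Type}

/-- The event that a trajectory `[s_h, s_{h+1}, …]` leaves the learned sets `G` at one of the `n`
stages `h, …, h + n - 1`. The state `d` is a filler for entries beyond the end of the list. -/
def escapeEvent (G : ℕ → Set S) (d : S) (h n : ℕ) : Set (List S) :=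
  {l | ∃ k < n, l.getD k d ∉ G (h + k)}

theorem escapeEvent_zero (G : ℕ → Set S) (d : S) (h : ℕ) : escapeEvent G d h 0 = ∅ := by
  simp [escapeEvent]

theorem cons_mem_escapeEvent_succ {G : ℕ → Set S} {d s : S} {h n : ℕ} {l : List S} :
    s :: l ∈ escapeEvent G d h (n + 1) ↔ s ∉ G h ∨ l ∈ escapeEvent G d (h + 1) n := by
  simp only [escapeEvent, Set.mem_ofPred_eq, Nat.exists_lt_succ_left, List.getD_cons_zero,
    List.getD_cons_succ, add_zero, add_assoc, add_comm 1]

theorem escapeEvent_one_eq (G : ℕ → Set S) (d : S) (n : ℕ) :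
    escapeEvent G d 1 n = {l | ∃ h, 1 ≤ h ∧ h ≤ n ∧ l.getD (h - 1) d ∉ G h} := by
  ext l
  constructor
  · rintro ⟨k, hkn, hk⟩
    exact ⟨1 + k, by omega, by omega, by rwa [Nat.add_sub_cancel_left]⟩
  · rintro ⟨h, one_le, h_le, hh⟩
    exact ⟨h - 1, by omega, by rwa [Nat.add_sub_cancel' one_le]⟩

theorem exists_eq_cons_of_mem_support_traj {P : S → A → PMF S} {π : ℕ → S → A} {t h : ℕ} {s : S}
    {l : List S} (hl : l ∈ (traj P π t h s).support) : ∃ l', l = s :: l' := by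
  cases t with
  | zero => exact ⟨[], by simpa [traj] using hl⟩
  | succ t =>
    obtain ⟨_, _, l', _, rfl⟩ := by simpa [traj] using hl
    exact ⟨l', rfl⟩

/-- The probability that the trajectory of `π` started from `s` at stage `h` leaves the learned sets
`G` at one of the `n` stages `h, …, h + n - 1`. These stages involve the first `n` states, hence
`n - 1` transitions; for `n = 0` the event is empty, so the truncated subtraction is harmless. -/
noncomputable def escapeProb (P : S → A → PMF S) (π : ℕ → S → A) (G : ℕ → Set S) (d : S)
    (n h : ℕ) (s : S) : ENNReal :=
  (traj P π (n - 1) h s).toOuterMeasure (escapeEvent G d h n)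

variable (P : S → A → PMF S) (π : ℕ → S → A) {G : ℕ → Set S} (d : S)

theorem escapeProb_ne_top (G : ℕ → Set S) (n h : ℕ) (s : S) : escapeProb P π G d n h s ≠ ⊤ := by
  rw [escapeProb, PMF.toOuterMeasure_apply]
  exact PMF.tsum_coe_indicator_ne_top _ _

theorem escapeProb_zero (G : ℕ → Set S) (h : ℕ) (s : S) : escapeProb P π G d 0 h s = 0 := by
  rw [escapeProb, escapeEvent_zero, MeasureTheory.measure_empty]

theorem escapeProb_succ_of_notMem (n : ℕ) {h : ℕ} {s : S} (hs : s ∉ G h) :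
    escapeProb P π G d (n + 1) h s = 1 := by
  rw [escapeProb, PMF.toOuterMeasure_apply_eq_one_iff]
  intro l hl
  obtain ⟨l', rfl⟩ := exists_eq_cons_of_mem_support_traj hl
  exact cons_mem_escapeEvent_succ.2 (.inl hs)

theorem escapeProb_succ_of_mem (n : ℕ) {h : ℕ} {s : S} (hs : s ∈ G h) :
    escapeProb P π G d (n + 1) h s =
      ∑' s', P s (π h s) s' * escapeProb P π G d n (h + 1) s' := by
  have preimage_cons (m : ℕ) :
      (s :: ·) ⁻¹' escapeEvent G d h (m + 1) = escapeEvent G d (h + 1) m := by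
    ext l
    simp [cons_mem_escapeEvent_succ, hs]
  cases n with
  | zero =>
    have not_escaped : [s] ∉ escapeEvent G d h 1 := by
      simp [cons_mem_escapeEvent_succ, hs, escapeEvent_zero]
    simp only [escapeProb_zero, mul_zero, tsum_zero]
    simp [escapeProb, traj, PMF.toOuterMeasure_pure_apply, not_escaped]
  | succ n =>
    simp only [escapeProb, Nat.add_sub_cancel, traj, PMF.toOuterMeasure_bind_apply,
      PMF.toOuterMeasure_map_apply, preimage_cons]

theorem hasSum_toReal_mul_escapeProb (n : ℕ) {h : ℕ} {s : S} (hs : s ∈ G h) :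
    HasSum (fun s' => (P s (π h s) s').toReal * (escapeProb P π G d n (h + 1) s').toReal)
      (escapeProb P π G d (n + 1) h s).toReal := by
  have step := escapeProb_succ_of_mem P π d n hs
  have tsum_ne_top := step ▸ escapeProb_ne_top P π d G (n + 1) h s
  rw [step, ENNReal.tsum_toReal_eq (ENNReal.ne_top_of_tsum_ne_top tsum_ne_top)]
  simpa only [ENNReal.toReal_mul] using ENNReal.hasSum_toReal tsum_ne_top

end Escape

section Value

variable {S A : Type} {P : S → A → PMF S} {r : S → A → ℝ} {π : ℕ → S → A} {V : ℕ → S → ℝ}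
  {h H : ℕ}

theorem policy_value_nonneg (hr : ∀ s a, 0 ≤ r s a) (hVTop : ∀ s, 0 ≤ V (H + 1) s)
    (hV : ∀ k, h ≤ k → k ≤ H → ∀ s,
      HasSum (fun s' => (P s (π k s) s').toReal * V (k + 1) s') (V k s - r s (π k s)))
    (hH : h ≤ H + 1) (s : S) : 0 ≤ V h s := by
  refine Nat.decreasingInduction' (P := fun k => ∀ s, 0 ≤ V k s)
    (fun k hkH hhk ih s => ?_) hH hVTop s
  have mean_nonneg : 0 ≤ V k s - r s (π k s) :=
    (hV k hhk (Nat.le_of_lt_succ hkH) s).nonneg fun s' =>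
      mul_nonneg ENNReal.toReal_nonneg (ih s')
  linarith [hr s (π k s)]

variable {U : ℕ → S → ℝ} {Q : ℕ → S → A → ℝ} {G : ℕ → Set S} {ε : ℕ → ℝ}

/- The rewards cancel in the difference of the two Bellman equations, so that `Q - V` is the mean of
`U - V` at the next state. -/
theorem backup_sub_value_le_escapeProb_add_const {n : ℕ} {d s : S} {c : ℝ} (hs : s ∈ G h)
    (hV : HasSum (fun s' => (P s (π h s) s').toReal * V (h + 1) s') (V h s - r s (π h s)))
    (hQ : HasSum (fun s' => (P s (π h s) s').toReal * U (h + 1) s') (Q h s (π h s) - r s (π h s)))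
    (hnext : ∀ s', U (h + 1) s' - V (h + 1) s' ≤ (escapeProb P π G d n (h + 1) s').toReal + c) :
    Q h s (π h s) - V h s ≤ (escapeProb P π G d (n + 1) h s).toReal + c := by
  have mean_sub : HasSum (fun s' => (P s (π h s) s').toReal * (U (h + 1) s' - V (h + 1) s'))
      (Q h s (π h s) - V h s) := by
    simpa only [mul_sub, sub_sub_sub_cancel_right] using hQ.sub hV
  have mean_escape :=
    hasSum_toReal_pmf_mul_add_const (hasSum_toReal_mul_escapeProb P π d n hs) c
  exact hasSum_le (fun s' => mul_le_mul_of_nonneg_left (hnext s') ENNReal.toReal_nonneg)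
    mean_sub mean_escape

theorem sub_policy_value_le_escapeProb_add_sum_gaps (hr : ∀ s a, 0 ≤ r s a)
    (hVTop : ∀ s, 0 ≤ V (H + 1) s)
    (hV : ∀ k, h ≤ k → k ≤ H → ∀ s,
      HasSum (fun s' => (P s (π k s) s').toReal * V (k + 1) s') (V k s - r s (π k s)))
    (hUTop : ∀ s, U (H + 1) s ≤ V (H + 1) s)
    (hQ : ∀ k, h ≤ k → k ≤ H → ∀ s,
      HasSum (fun s' => (P s (π k s) s').toReal * U (k + 1) s') (Q k s (π k s) - r s (π k s)))
    (hULe : ∀ k, h ≤ k → k ≤ H → ∀ s, U k s ≤ 1) (hε : ∀ k, 0 ≤ ε k)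
    (hgap : ∀ k, h ≤ k → k ≤ H → ∀ s ∈ G k, U k s - Q k s (π k s) ≤ ε k)
    (hH : h ≤ H + 1) (d s : S) :
    U h s - V h s ≤ (escapeProb P π G d (H + 1 - h) h s).toReal + ∑ k ∈ Ico h (H + 1), ε k := by
  refine Nat.decreasingInduction' (P := fun k => ∀ s, U k s - V k s ≤
    (escapeProb P π G d (H + 1 - k) k s).toReal + ∑ j ∈ Ico k (H + 1), ε j)
    (fun k hkH hhk ih s => ?_) hH (fun s => ?_) s
  · have hkH' : k ≤ H := Nat.le_of_lt_succ hkH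
    rw [Nat.succ_sub hkH']
    by_cases hs : s ∈ G k
    · rw [Nat.add_sub_add_right] at ih
      have backup_le := backup_sub_value_le_escapeProb_add_const hs (hV k hhk hkH' s)
        (hQ k hhk hkH' s) ih
      rw [sum_eq_sum_Ico_succ_bot hkH]
      linarith [hgap k hhk hkH' s hs]
    · rw [escapeProb_succ_of_notMem P π d _ hs, ENNReal.toReal_one]
      have value_nonneg : 0 ≤ V k s :=
        policy_value_nonneg hr hVTop (fun j hj => hV j (hhk.trans hj)) hkH.le s
      have sum_gaps_nonneg : 0 ≤ ∑ j ∈ Ico k (H + 1), ε j := sum_nonneg fun j _ => hε j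
      linarith [hULe k hhk hkH' s]
  · simpa [escapeProb_zero] using hUTop s

end Value

/- Writing the Bellman equations with `HasSum` makes them include the existence of the means, so
that no junk value of a divergent sum enters when `S` is infinite. -/
theorem suboptimality_le_escape_prob_add_gaps_general
    {S A : Type} (P : S → A → PMF S) (r : S → A → ℝ) (H : ℕ) (hr : ∀ s a, 0 ≤ r s a)
    (π : ℕ → S → A)
    (V : ℕ → S → ℝ) (hVTop : ∀ s, 0 ≤ V (H + 1) s)
    (hV : ∀ h, 1 ≤ h → h ≤ H → ∀ s,
      HasSum (fun s' => (P s (π h s) s').toReal * V (h + 1) s') (V h s - r s (π h s)))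
    (U : ℕ → S → ℝ) (Q : ℕ → S → A → ℝ) (hUTop : ∀ s, U (H + 1) s ≤ V (H + 1) s)
    (hQ : ∀ h, 1 ≤ h → h ≤ H → ∀ s,
      HasSum (fun s' => (P s (π h s) s').toReal * U (h + 1) s') (Q h s (π h s) - r s (π h s)))
    (hULe : ∀ h, 1 ≤ h → h ≤ H → ∀ s, U h s ≤ 1)
    (G : ℕ → Set S) (ε : ℕ → ℝ) (hε : ∀ h, 0 ≤ ε h)
    (hgap : ∀ h, 1 ≤ h → h ≤ H → ∀ s ∈ G h, U h s - Q h s (π h s) ≤ ε h)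
    (s₁ : S) (p : ℝ)
    (hp : p = (∑' l : List S,
        Set.indicator {l : List S | ∃ h : ℕ, 1 ≤ h ∧ h ≤ H ∧ l.getD (h - 1) s₁ ∉ G h}
          (traj P π (H - 1) 1 s₁) l).toReal) :
    U 1 s₁ - V 1 s₁ ≤ p + ∑ h ∈ Icc 1 H, ε h := by
  have p_eq : p = (escapeProb P π G s₁ H 1 s₁).toReal := by
    rw [hp, escapeProb, escapeEvent_one_eq, PMF.toOuterMeasure_apply]
  rw [p_eq, ← Ico_add_one_right_eq_Icc]
  exact sub_policy_value_le_escapeProb_add_sum_gaps hr hVTop hV hUTop hQ hULe hε hgap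
    (Nat.le_add_left 1 H) s₁ s₁

/-- **Suboptimality via learned states and escape probability.**  In a
finite-horizon MDP with nonnegative expected rewards and optimal values bounded
by one, if the policy `π` has per-state action gap at most `ε h` on every
"learned" state `s ∈ G h`, then its suboptimality from `s₁` is at most the
probability `p` (under the trajectory distribution of `π` from `s₁`) of
reaching some unlearned state `s_h ∉ G_h`, plus `∑_{h=1}^H ε_h`. -/
theorem suboptimality_le_escape_prob_add_gaps
    {S A : Type} [Fintype S] [Fintype A] [Nonempty A]
    (P : S → A → PMF S) (r : S → A → ℝ) (H : ℕ)
    (hr : ∀ (s : S) (a : A), 0 ≤ r s a)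
    (π : ℕ → S → A)
    (Vpol : ℕ → S → ℝ)
    (hVpolTop : ∀ s : S, Vpol (H + 1) s = 0)
    (hVpolRec : ∀ h : ℕ, 1 ≤ h → h ≤ H → ∀ s : S,
      Vpol h s = r s (π h s) + ∑ s' : S, (P s (π h s) s').toReal * Vpol (h + 1) s')
    (Vstar : ℕ → S → ℝ) (Qstar : ℕ → S → A → ℝ)
    (hVstarTop : ∀ s : S, Vstar (H + 1) s = 0)
    (hQstar : ∀ h : ℕ, 1 ≤ h → h ≤ H → ∀ (s : S) (a : A),
      Qstar h s a = r s a + ∑ s' : S, (P s a s').toReal * Vstar (h + 1) s')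
    (hVstar : ∀ h : ℕ, 1 ≤ h → h ≤ H → ∀ s : S,
      Vstar h s = Finset.univ.sup' Finset.univ_nonempty (fun a : A => Qstar h s a))
    (hVstarLe : ∀ h : ℕ, 1 ≤ h → h ≤ H → ∀ s : S, Vstar h s ≤ 1)
    (G : ℕ → Set S) (ε : ℕ → ℝ) (hε : ∀ h : ℕ, 0 ≤ ε h)
    (hgap : ∀ h : ℕ, 1 ≤ h → h ≤ H → ∀ s ∈ G h, Vstar h s - Qstar h s (π h s) ≤ ε h)
    (s₁ : S) (p : ℝ)
    (hp : p = (∑' l : List S,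
        Set.indicator {l : List S | ∃ h : ℕ, 1 ≤ h ∧ h ≤ H ∧ l.getD (h - 1) s₁ ∉ G h}
          (traj P π (H - 1) 1 s₁) l).toReal) :
    Vstar 1 s₁ - Vpol 1 s₁ ≤ p + ∑ h ∈ Finset.Icc 1 H, ε h := by
  exact suboptimality_le_escape_prob_add_gaps_general P r H hr π Vpol (fun s => (hVpolTop s).ge)
    (fun h h1 hH s => sub_eq_of_eq_add' (hVpolRec h h1 hH s) ▸ hasSum_fintype _)
    Vstar Qstar (fun s => (hVstarTop s).trans_le (hVpolTop s).ge)
    (fun h h1 hH s => sub_eq_of_eq_add' (hQstar h h1 hH s (π h s)) ▸ hasSum_fintype _)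
    hVstarLe G ε hε hgap s₁ p hp
end

section
/- (Error propagation for one-step empirical policy optimization with approximate future values.) Let X be a finite set of contexts with a probability mass function μ on X, let A be a finite nonempty set of actions, let R : X → A → ℝ be expected immediate rewards, and let W, W★ : A → ℝ be estimated and true future values satisfying |W(a) − W★(a)| ≤ β for all a ∈ A. Let Π be a finite set of policies X → A containing a policy π★ with π★(x) ∈ argmax_{a ∈ A} ( R(x,a) + W★(a) ) for every x ∈ X. Define the optimal value V★ = Σ_x μ(x) · max_{a ∈ A} ( R(x,a) + W★(a) ) and, for π ∈ Π, the surrogate value V(π) = Σ_x μ(x) · ( R(x, π(x)) + W(π(x)) ). Suppose V̂ : Π → ℝ satisfies |V̂(π) − V(π)| ≤ ε_stat for all π ∈ Π, and suppose π̃ ∈ Π satisfies V̂(π̃) ≥ max_{π ∈ Π} V̂(π) − ε_sub. Then the estimate Ṽ := V̂(π̃) satisfies |Ṽ − V★| ≤ ε_stat + β + ε_sub. -/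
open Finset

/-!
`Vhat` is within `εstat` of the surrogate value of every policy in the class, which is within `β` of
its true value, being an average of errors at most `β`. So `Vhat` is an `(εstat + β)`-accurate proxy
for the true value, and approximately maximizing a proxy recovers the true maximum, which is `V★`
because the class contains a pointwise-optimal policy.
-/

theorem abs_sub_le_of_approx_isMaxOn {ι G : Type*} [AddCommGroup G] [LinearOrder G]
    [IsOrderedAddMonoid G] {S : Set ι} {f g : ι → G} {δ ε : G} {s t : ι}
    (hfg : ∀ i ∈ S, |g i - f i| ≤ δ) (hs : s ∈ S) (hfs : IsMaxOn f S s)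
    (ht : t ∈ S) (hgt : ∀ i ∈ S, g i - ε ≤ g t) :
    |g t - f s| ≤ δ + ε := by
  have hε : 0 ≤ ε := sub_le_self_iff (g t) |>.mp (hgt t ht)
  refine abs_sub_le_iff.mpr ⟨?_, ?_⟩
  · calc
      g t - f s ≤ g t - f t := sub_le_sub_left (hfs ht) _
      _ ≤ δ := (abs_sub_le_iff.mp (hfg t ht)).1
      _ ≤ δ + ε := le_add_of_nonneg_right hε
  · calc
      f s - g t ≤ f s - (g s - ε) := sub_le_sub_left (hgt s hs) _
      _ = (f s - g s) + ε := by abel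
      _ ≤ δ + ε := by gcongr; exact (abs_sub_le_iff.mp (hfg s hs)).2

theorem abs_sum_mul_sub_sum_mul_le {ι K : Type*} [Ring K] [LinearOrder K] [IsOrderedRing K]
    {s : Finset ι} {w f g : ι → K} {c : K} (hw : ∀ i ∈ s, 0 ≤ w i)
    (hfg : ∀ i ∈ s, |f i - g i| ≤ c) :
    |∑ i ∈ s, w i * f i - ∑ i ∈ s, w i * g i| ≤ (∑ i ∈ s, w i) * c := by
  rw [← sum_sub_distrib, sum_mul]
  refine (abs_sum_le_sum_abs _ _).trans (sum_le_sum fun i hi => ?_)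
  rw [← mul_sub, abs_mul, abs_of_nonneg (hw i hi)]
  exact mul_le_mul_of_nonneg_left (hfg i hi) (hw i hi)

section Policies

variable {X A : Type*} [Fintype X]

/-- The value of the policy `π` when contexts have weights `μ` and `Q x a` is the value of action
`a` in context `x`. It is the paper's surrogate `V(π)` for `Q x a = R x a + W a`. -/
def policyValue (μ : X → ℝ) (Q : X → A → ℝ) (π : X → A) : ℝ :=
  ∑ x, μ x * Q x (π x)

/-- The optimal value: the average over contexts of the best action value, the paper's `V★` for
`Q x a = R x a + W★ a`. The real supremum is `0` where `Q x` is unbounded above. -/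
noncomputable def optimalValue (μ : X → ℝ) (Q : X → A → ℝ) : ℝ :=
  ∑ x, μ x * ⨆ a, Q x a

variable {μ : X → ℝ} {Q Qstar : X → A → ℝ} {β : ℝ} {πstar : X → A}

theorem abs_policyValue_sub_policyValue_le (hμ0 : ∀ x, 0 ≤ μ x) (hμ1 : ∑ x, μ x = 1)
    (hQ : ∀ x a, |Q x a - Qstar x a| ≤ β) (π : X → A) :
    |policyValue μ Q π - policyValue μ Qstar π| ≤ β := by
  simpa only [policyValue, hμ1, one_mul] using
    abs_sum_mul_sub_sum_mul_le (fun x _ => hμ0 x) fun x (_ : x ∈ univ) => hQ x (π x)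

theorem policyValue_le_policyValue_of_forall_le (hμ0 : ∀ x, 0 ≤ μ x)
    (hπstar : ∀ x a, Q x a ≤ Q x (πstar x)) (π : X → A) :
    policyValue μ Q π ≤ policyValue μ Q πstar :=
  sum_le_sum fun x _ => mul_le_mul_of_nonneg_left (hπstar x (π x)) (hμ0 x)

theorem optimalValue_eq_policyValue_of_forall_le (hπstar : ∀ x a, Q x a ≤ Q x (πstar x)) :
    optimalValue μ Q = policyValue μ Q πstar := by
  have iSup_eq (x : X) : ⨆ a, Q x a = Q x (πstar x) :=
    IsGreatest.csSup_eq ⟨Set.mem_range_self _, Set.forall_mem_range.mpr (hπstar x)⟩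
  simp only [optimalValue, policyValue, iSup_eq]

theorem error_propagation_policy_opt_general (hμ0 : ∀ x, 0 ≤ μ x) (hμ1 : ∑ x, μ x = 1)
    (hQ : ∀ x a, |Q x a - Qstar x a| ≤ β)
    {Pi : Set (X → A)} (hπstarMem : πstar ∈ Pi)
    (hπstar : ∀ x a, Qstar x a ≤ Qstar x (πstar x))
    {εstat εsub : ℝ} {Vhat : (X → A) → ℝ}
    (hVhat : ∀ π ∈ Pi, |Vhat π - policyValue μ Q π| ≤ εstat)
    {πt : X → A} (hπtMem : πt ∈ Pi) (hπtMax : ∀ π ∈ Pi, Vhat π - εsub ≤ Vhat πt) :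
    |Vhat πt - optimalValue μ Qstar| ≤ εstat + β + εsub := by
  have hVhat_true : ∀ π ∈ Pi, |Vhat π - policyValue μ Qstar π| ≤ εstat + β := fun π hπ =>
    (abs_sub_le _ (policyValue μ Q π) _).trans <|
      add_le_add (hVhat π hπ) (abs_policyValue_sub_policyValue_le hμ0 hμ1 hQ π)
  have hπstar_max : IsMaxOn (policyValue μ Qstar) Pi πstar := fun π _ =>
    policyValue_le_policyValue_of_forall_le hμ0 hπstar π
  rw [optimalValue_eq_policyValue_of_forall_le hπstar]
  exact abs_sub_le_of_approx_isMaxOn hVhat_true hπstarMem hπstar_max hπtMem hπtMax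

end Policies

/-- **Error propagation for one-step empirical policy optimization with
approximate future values.**  With context distribution `μ`, expected rewards
`R`, estimated future values `W` within `β` of the true future values `Wstar`,
a finite policy class `Pi` containing a pointwise-optimal policy `πstar`, an
empirical estimate `Vhat` of the surrogate value that is uniformly `εstat`
accurate on `Pi`, and an `εsub`-approximate maximizer `πt` of `Vhat` over `Pi`,
the estimate `Vhat πt` is within `εstat + β + εsub` of the optimal value
`V★ = ∑ₓ μ(x) · maxₐ (R(x,a) + Wstar(a))`. -/
theorem error_propagation_policy_opt
    {X A : Type} [Fintype X] [Fintype A] [Nonempty A]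
    (μ : X → ℝ) (hμ0 : ∀ x : X, 0 ≤ μ x) (hμ1 : ∑ x : X, μ x = 1)
    (R : X → A → ℝ) (W Wstar : A → ℝ) (β : ℝ)
    (hW : ∀ a : A, |W a - Wstar a| ≤ β)
    (Pi : Finset (X → A)) (πstar : X → A) (hπstarMem : πstar ∈ Pi)
    (hπstar : ∀ (x : X) (a : A), R x a + Wstar a ≤ R x (πstar x) + Wstar (πstar x))
    (εstat εsub : ℝ)
    (Vhat : (X → A) → ℝ)
    (hVhat : ∀ π ∈ Pi, |Vhat π - ∑ x : X, μ x * (R x (π x) + W (π x))| ≤ εstat)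
    (πt : X → A) (hπtMem : πt ∈ Pi)
    (hπtMax : ∀ π ∈ Pi, Vhat π - εsub ≤ Vhat πt) :
    |Vhat πt - ∑ x : X, μ x * (Finset.univ.sup' Finset.univ_nonempty
        (fun a : A => R x a + Wstar a))|
      ≤ εstat + β + εsub := by
  have hQ (x : X) (a : A) : |(R x a + W a) - (R x a + Wstar a)| ≤ β := by
    simpa only [add_sub_add_left_eq_sub] using hW a
  simpa only [optimalValue, sup'_univ_eq_ciSup] using
    error_propagation_policy_opt_general (Pi := Pi) hμ0 hμ1 hQ hπstarMem hπstar hVhat hπtMem hπtMax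
end

section
/- (Anti-concentration core of the Bellman-backup lower bound.) Let H ≥ 1 be an integer, ε ∈ (0,1), and let n be a positive integer with n ≤ 4^H / (32 ε²). Let X be a Binomial(n, 1/2) random variable (the sum of n i.i.d. Bernoulli(1/2) variables). Then P[ X ≥ n·(1/2 + ε/2^H) ] ≥ 1/4; equivalently, with probability at least 1/4 the empirical mean X/n of the n Bernoulli(1/2) samples is at least 1/2 + ε/2^H. -/
open Finset

/-!
By the symmetry `n.choose k = n.choose (n - k)`, the upper tail starting at `j` carries half of the
mass that is left after removing the `2 * j - n - 1` central terms, each of which is at most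
`n.choose (n / 2)`. For `j = ⌈n / 2 + t⌉` with `t ≤ √(n / 32)`, the number `d + 1` of central terms
satisfies `8 * d ^ 2 < n`, and the bound `n.choose (n / 2) ^ 2 * (3 * ⌈n / 2⌉ + 1) ≤ 4 ^ n` then
shows that they carry at most half of the total mass.
-/

theorem centralBinom_sq_mul_le (m : ℕ) : m.centralBinom ^ 2 * (3 * m + 1) ≤ 16 ^ m := by
  induction m with
  | zero => simp
  | succ m ih =>
    have ratio_le : (2 * (2 * m + 1)) ^ 2 * (3 * m + 4) ≤ 16 * (m + 1) ^ 2 * (3 * m + 1) := by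
      nlinarith
    refine le_of_mul_le_mul_left ?_ (by positivity : 0 < (m + 1) ^ 2)
    calc (m + 1) ^ 2 * ((m + 1).centralBinom ^ 2 * (3 * (m + 1) + 1))
        = ((m + 1) * (m + 1).centralBinom) ^ 2 * (3 * m + 4) := by ring
      _ = (2 * (2 * m + 1)) ^ 2 * (3 * m + 4) * m.centralBinom ^ 2 := by
        rw [Nat.succ_mul_centralBinom_succ]; ring
      _ ≤ 16 * (m + 1) ^ 2 * (3 * m + 1) * m.centralBinom ^ 2 := by gcongr
      _ = 16 * (m + 1) ^ 2 * (m.centralBinom ^ 2 * (3 * m + 1)) := by ring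
      _ ≤ 16 * (m + 1) ^ 2 * 16 ^ m := by gcongr
      _ = (m + 1) ^ 2 * 16 ^ (m + 1) := by ring

theorem centralBinom_succ_eq_two_mul_choose (m : ℕ) :
    (m + 1).centralBinom = 2 * (2 * m + 1).choose m := by
  rw [Nat.centralBinom_eq_two_mul_choose, show 2 * (m + 1) = 2 * m + 1 + 1 by ring,
    Nat.choose_succ_succ, Nat.choose_symm_half, two_mul ((2 * m + 1).choose m)]

theorem choose_half_sq_mul_le (n : ℕ) :
    n.choose (n / 2) ^ 2 * (3 * ((n + 1) / 2) + 1) ≤ 4 ^ n := by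
  obtain ⟨m, rfl | rfl⟩ := Nat.even_or_odd' n
  · rw [show 2 * m / 2 = m by lia, show (2 * m + 1) / 2 = m by lia, pow_mul,
      ← Nat.centralBinom_eq_two_mul_choose]
    exact centralBinom_sq_mul_le m
  · rw [show (2 * m + 1) / 2 = m by lia, show (2 * m + 1 + 1) / 2 = m + 1 by lia]
    refine le_of_mul_le_mul_left ?_ (by norm_num : 0 < 4)
    calc 4 * ((2 * m + 1).choose m ^ 2 * (3 * (m + 1) + 1))
        = (m + 1).centralBinom ^ 2 * (3 * (m + 1) + 1) := by
          rw [centralBinom_succ_eq_two_mul_choose]; ring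
      _ ≤ 16 ^ (m + 1) := centralBinom_sq_mul_le (m + 1)
      _ = 4 * 4 ^ (2 * m + 1) := by rw [show 16 = 4 ^ 2 by rfl, ← pow_mul]; ring

theorem sum_range_choose_eq_sum_Ico_choose (n j : ℕ) :
    ∑ k ∈ range (n + 1 - j), n.choose k = ∑ k ∈ Ico j (n + 1), n.choose k := by
  refine sum_nbij' (n - ·) (n - ·) ?_ ?_ ?_ ?_ fun k hk ↦ (Nat.choose_symm ?_).symm <;>
    simp only [mem_range, mem_Ico] at * <;> lia

theorem sum_union_le_add_sum {ι M : Type*} [DecidableEq ι] [AddCommMonoid M] [Preorder M]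
    [CanonicallyOrderedAdd M] (s t : Finset ι) (f : ι → M) :
    ∑ i ∈ s ∪ t, f i ≤ ∑ i ∈ s, f i + ∑ i ∈ t, f i :=
  le_self_add.trans_eq sum_union_inter

-- Truncated subtraction is harmless: the last term vanishes when there are no central terms.
theorem two_pow_le_two_mul_sum_Ico_choose_add (n j : ℕ) :
    2 ^ n ≤ 2 * ∑ k ∈ Ico j (n + 1), n.choose k + (2 * j - n - 1) * n.choose (n / 2) := by
  have central_le : ∑ k ∈ Ico (n + 1 - j) j, n.choose k ≤ (2 * j - n - 1) * n.choose (n / 2) := by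
    calc ∑ k ∈ Ico (n + 1 - j) j, n.choose k
        ≤ #(Ico (n + 1 - j) j) • n.choose (n / 2) :=
          sum_le_card_nsmul _ _ _ fun k _ ↦ Nat.choose_le_middle k n
      _ ≤ (2 * j - n - 1) * n.choose (n / 2) := by
          rw [Nat.card_Ico, smul_eq_mul]
          exact Nat.mul_le_mul_right _ (by lia)
  have cover : range (n + 1) ⊆ range (n + 1 - j) ∪ Ico (n + 1 - j) j ∪ Ico j (n + 1) := by
    intro k
    simp only [mem_union, mem_range, mem_Ico]
    lia
  calc 2 ^ n = ∑ k ∈ range (n + 1), n.choose k := (Nat.sum_range_choose n).symm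
    _ ≤ ∑ k ∈ range (n + 1 - j) ∪ Ico (n + 1 - j) j ∪ Ico j (n + 1), n.choose k :=
      sum_le_sum_of_subset cover
    _ ≤ ∑ k ∈ range (n + 1 - j), n.choose k + ∑ k ∈ Ico (n + 1 - j) j, n.choose k
        + ∑ k ∈ Ico j (n + 1), n.choose k := by
      grw [sum_union_le_add_sum, sum_union_le_add_sum]
    _ ≤ 2 * ∑ k ∈ Ico j (n + 1), n.choose k + (2 * j - n - 1) * n.choose (n / 2) := by
      rw [sum_range_choose_eq_sum_Ico_choose]; lia

theorem two_pow_le_four_mul_sum_Ico_choose {n j : ℕ}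
    (hj : 4 * (2 * j - n - 1) ^ 2 ≤ 3 * ((n + 1) / 2) + 1) :
    2 ^ n ≤ 4 * ∑ k ∈ Ico j (n + 1), n.choose k := by
  have central_le : 2 * ((2 * j - n - 1) * n.choose (n / 2)) ≤ 2 ^ n := by
    rw [← Nat.pow_le_pow_iff_left two_ne_zero]
    calc (2 * ((2 * j - n - 1) * n.choose (n / 2))) ^ 2
        = n.choose (n / 2) ^ 2 * (4 * (2 * j - n - 1) ^ 2) := by ring
      _ ≤ n.choose (n / 2) ^ 2 * (3 * ((n + 1) / 2) + 1) := by gcongr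
      _ ≤ 4 ^ n := choose_half_sq_mul_le n
      _ = (2 ^ n) ^ 2 := by rw [pow_right_comm]; rfl
  linarith [two_pow_le_two_mul_sum_Ico_choose_add n j]

theorem four_mul_succ_sq_le {d n : ℕ} (h : 8 * d ^ 2 < n) :
    4 * (d + 1) ^ 2 ≤ 3 * ((n + 1) / 2) + 1 := by
  have half_ge : 4 * d ^ 2 + 1 ≤ (n + 1) / 2 := by lia
  linarith [Nat.le_self_pow two_ne_zero d]

theorem four_mul_central_count_sq_le {n : ℕ} {t : ℝ} (ht : t ≤ √(n / 32)) :
    4 * (2 * ⌈n / 2 + t⌉₊ - n - 1) ^ 2 ≤ 3 * ((n + 1) / 2) + 1 := by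
  obtain no_central | central := le_or_gt (2 * ⌈n / 2 + t⌉₊) (n + 1)
  · simp [show 2 * ⌈n / 2 + t⌉₊ - n - 1 = 0 by lia]
  obtain ⟨d, hd⟩ := Nat.exists_eq_add_of_le (show n + 2 ≤ 2 * ⌈n / 2 + t⌉₊ from central)
  rw [show 2 * ⌈n / 2 + t⌉₊ - n - 1 = d + 1 by lia]
  apply four_mul_succ_sq_le
  have d_half_lt : (d : ℝ) / 2 < √(n / 32) := by
    have pred_lt : ((⌈n / 2 + t⌉₊ - 1 : ℕ) : ℝ) < n / 2 + t := Nat.lt_ceil.1 (by lia)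
    rw [Nat.cast_pred (by lia)] at pred_lt
    have hd' : 2 * (⌈n / 2 + t⌉₊ : ℝ) = n + 2 + d := mod_cast hd
    linarith
  rw [Real.lt_sqrt (by positivity)] at d_half_lt
  have : 8 * (d : ℝ) ^ 2 < n := by linarith
  exact_mod_cast this

theorem sum_range_ite_le_eq_sum_Ico_ceil {R M : Type*} [Semiring R] [LinearOrder R]
    [FloorSemiring R] [AddCommMonoid M] (f : ℕ → M) (x : R) (n : ℕ) :
    ∑ k ∈ range n, (if x ≤ k then f k else 0) = ∑ k ∈ Ico ⌈x⌉₊ n, f k := by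
  rw [← sum_filter]
  congr 1
  ext k
  simp only [mem_filter, mem_range, mem_Ico, Nat.ceil_le, and_comm]

theorem mul_div_le_sqrt_div_of_le {x y c ε : ℝ} (hx : 0 ≤ x) (hy : y ≠ 0) (hc : c ≠ 0)
    (hε : ε ≠ 0) (h : x ≤ y ^ 2 / (c * ε ^ 2)) : x * (ε / y) ≤ √(x / c) := by
  apply Real.le_sqrt_of_sq_le
  calc (x * (ε / y)) ^ 2 = x * (ε / y) ^ 2 * x := by ring
    _ ≤ x * (ε / y) ^ 2 * (y ^ 2 / (c * ε ^ 2)) := by gcongr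
    _ = x / c := by field_simp

theorem binomial_tail_anticoncentration_general (n : ℕ) {t : ℝ} (ht : t ≤ √(n / 32)) :
    (1 : ℝ) / 4 ≤ ∑ k ∈ range (n + 1),
      if n / 2 + t ≤ (k : ℝ) then (n.choose k : ℝ) / 2 ^ n else 0 := by
  have tail_ge : (2 : ℝ) ^ n ≤ 4 * ∑ k ∈ Ico ⌈n / 2 + t⌉₊ (n + 1), (n.choose k : ℝ) :=
    mod_cast two_pow_le_four_mul_sum_Ico_choose (four_mul_central_count_sq_le ht)
  rw [sum_range_ite_le_eq_sum_Ico_ceil, ← sum_div, le_div_iff₀ (by positivity)]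
  linarith

/-- **Anti-concentration core of the Bellman-backup lower bound.**  For `H ≥ 1`,
`ε ∈ (0,1)`, and a positive integer `n ≤ 4^H / (32 ε²)`, a Binomial(n, 1/2)
random variable `X` (the number of successes among `n` fair coin flips, so that
`P[X = k] = C(n,k) / 2ⁿ`) satisfies `P[X ≥ n (1/2 + ε/2^H)] ≥ 1/4`. -/
theorem binomial_tail_anticoncentration
    (H : ℕ) (hH : 1 ≤ H) (ε : ℝ) (hε0 : 0 < ε) (hε1 : ε < 1)
    (n : ℕ) (hn : 0 < n) (hnle : (n : ℝ) ≤ 4 ^ H / (32 * ε ^ 2)) :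
    (1 : ℝ) / 4
      ≤ ∑ k ∈ Finset.range (n + 1),
          if (n : ℝ) * (1 / 2 + ε / 2 ^ H) ≤ (k : ℝ)
          then (n.choose k : ℝ) / 2 ^ n else 0 := by
  have four_pow : (4 : ℝ) ^ H = (2 ^ H) ^ 2 := by rw [pow_right_comm]; norm_num
  simpa only [mul_add, mul_one_div] using binomial_tail_anticoncentration_general n <|
    mul_div_le_sqrt_div_of_le n.cast_nonneg (by positivity) (by norm_num) hε0.ne' (four_pow ▸ hnle)
end

section
/- (Core equivalence in the NP-hardness reduction for OLIVE's optimization.) Let ψ be a 3-CNF formula over n Boolean variables given by m clauses, where clause j consists of three literals (var(j,k), pol(j,k)) for k ∈ {1,2,3}, with var(j,k) ∈ {1,…,n} a variable index and pol(j,k) ∈ {true,false} its polarity (true meaning the positive literal x_i, false meaning ¬x_i); an assignment y : {1,…,n} → {true,false} satisfies ψ iff for every clause j there is some k with y(var(j,k)) = pol(j,k). Then ψ is satisfiable if and only if there exists v : {1,…,n} × {true,false} → [0,1] such that (i) v(i,true) + v(i,false) = 1 for every i, and (ii) for every clause j there exists b : {1,2,3} → {true,false}, not identically false, such that for every k ∈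 {1,2,3}, v( var(j,k), pol(j,k) if b(k) = true, and the negation of pol(j,k) if b(k) = false ) = 1. -/
/-!
Complementarity lets at most one of two opposite literals have value `1`, so the literals of
value `1` define an assignment; the positions with `b k = true` then witness that each clause is
satisfied. Conversely, take the indicator of the literals made true by a satisfying assignment. In
each clause let `b` mark the true literals: it then selects exactly the true member of every
literal/negation pair, and it marks some position because the clause is satisfied.
-/

/-- The `0`/`1` value function on literal states induced by an assignment `y`: the literal `(i, c)`
has value `1` when `y` makes it true. -/
def literalIndicator {ι : Type*} (R : Type*) [Zero R] [One R] (y : ι → Bool) (i : ι) (c : Bool) :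
    R :=
  if y i = c then 1 else 0

open Classical in
/-- The assignment read off a value function `v` on literal states: `i` is true when its positive
literal has value exactly `1`. All other values, fractional ones included, are sent to `false`. -/
noncomputable def roundedAssignment {ι R : Type*} [One R] (v : ι → Bool → R) (i : ι) : Bool :=
  decide (v i true = 1)

section

variable {ι κ R : Type*}

theorem literalIndicator_self [Zero R] [One R] (y : ι → Bool) (i : ι) :
    literalIndicator R y i (y i) = 1 :=
  if_pos rfl

theorem literalIndicator_mem_Icc [Zero R] [One R] [Preorder R] [ZeroLEOneClass R]
    (y : ι → Bool) (i : ι) (c : Bool) : literalIndicator R y i c ∈ Set.Icc (0 : R) 1 := by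
  unfold literalIndicator
  split_ifs
  · exact Set.right_mem_Icc.mpr zero_le_one
  · exact Set.left_mem_Icc.mpr zero_le_one

theorem literalIndicator_true_add_false [AddZeroClass R] [One R] (y : ι → Bool) (i : ι) :
    literalIndicator R y i true + literalIndicator R y i false = 1 := by
  cases h : y i <;> simp [literalIndicator, h]

theorem ite_decide_eq_self_not (a p : Bool) : (if decide (a = p) then p else !p) = a := by
  cases a <;> cases p <;> rfl

theorem exists_selection_literalIndicator_eq_one [Zero R] [One R] {y : ι → Bool} {x : κ → ι}
    {p : κ → Bool} (hsat : ∃ k, y (x k) = p k) :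
    ∃ b : κ → Bool, (∃ k, b k = true) ∧
      ∀ k, literalIndicator R y (x k) (if b k then p k else !(p k)) = 1 := by
  refine ⟨fun k => decide (y (x k) = p k), hsat.imp fun _ hk => decide_eq_true hk, fun k => ?_⟩
  rw [ite_decide_eq_self_not]
  exact literalIndicator_self y (x k)

theorem roundedAssignment_eq_of_eq_one [AddMonoid R] [IsLeftCancelAdd R] [One R]
    [NeZero (1 : R)] {v : ι → Bool → R} {i : ι} {c : Bool} (hsum : v i true + v i false = 1)
    (hc : v i c = 1) : roundedAssignment v i = c := by
  classical
  cases c with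
  | true => exact decide_eq_true hc
  | false =>
    refine decide_eq_false fun htrue => one_ne_zero (α := R) ?_
    rwa [htrue, hc, add_eq_left] at hsum

theorem exists_roundedAssignment_eq_of_selection [AddMonoid R] [IsLeftCancelAdd R] [One R]
    [NeZero (1 : R)] {v : ι → Bool → R} (hsum : ∀ i, v i true + v i false = 1) {x : κ → ι}
    {p b : κ → Bool} (hb : ∃ k, b k = true)
    (hv : ∀ k, v (x k) (if b k then p k else !(p k)) = 1) :
    ∃ k, roundedAssignment v (x k) = p k := by
  obtain ⟨k, hk⟩ := hb
  have hliteral : v (x k) (p k) = 1 := by simpa only [hk, if_true] using hv k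
  exact ⟨k, roundedAssignment_eq_of_eq_one (hsum (x k)) hliteral⟩

end

theorem olive_np_hardness_core_equivalence_general {ι γ : Type*} {κ : γ → Type*} (R : Type*)
    [Semiring R] [PartialOrder R] [IsStrictOrderedRing R]
    (var : ∀ j, κ j → ι) (pol : ∀ j, κ j → Bool) :
    (∃ y : ι → Bool, ∀ j, ∃ k, y (var j k) = pol j k)
    ↔ ∃ v : ι → Bool → R,
        (∀ i b, v i b ∈ Set.Icc (0 : R) 1)
        ∧ (∀ i, v i true + v i false = 1)
        ∧ ∀ j, ∃ b : κ j → Bool, (∃ k, b k = true)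
            ∧ ∀ k, v (var j k) (if b k then pol j k else !(pol j k)) = 1 := by
  constructor
  · rintro ⟨y, hsat⟩
    exact ⟨literalIndicator R y, literalIndicator_mem_Icc y, literalIndicator_true_add_false y,
      fun j => exists_selection_literalIndicator_eq_one (hsat j)⟩
  · rintro ⟨v, -, hsum, hclause⟩
    refine ⟨roundedAssignment v, fun j => ?_⟩
    obtain ⟨b, hb, hv⟩ := hclause j
    exact exists_roundedAssignment_eq_of_selection hsum hb hv

/-- **Core equivalence in the NP-hardness reduction for OLIVE's optimization.**
A 3-CNF formula with `m` clauses over `n` variables, whose `j`-th clause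
consists of the literals `(var j k, pol j k)` for `k ∈ {1,2,3}`, is satisfiable
if and only if there is an assignment `v` of values in `[0,1]` to the `2n`
literal states such that `v(i, true) + v(i, false) = 1` for every variable `i`,
and for every clause `j` there is a choice `b : Fin 3 → Bool`, not identically
`false`, with `v` equal to `1` on the literal selected by `b k` for every
`k` (the literal itself if `b k = true`, its negation if `b k = false`). -/
theorem olive_np_hardness_core_equivalence
    (n m : ℕ) (var : Fin m → Fin 3 → Fin n) (pol : Fin m → Fin 3 → Bool) :
    (∃ y : Fin n → Bool, ∀ j : Fin m, ∃ k : Fin 3, y (var j k) = pol j k)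
    ↔ ∃ v : Fin n → Bool → ℝ,
        (∀ (i : Fin n) (b : Bool), v i b ∈ Set.Icc (0 : ℝ) 1)
        ∧ (∀ i : Fin n, v i true + v i false = 1)
        ∧ ∀ j : Fin m, ∃ b : Fin 3 → Bool, (∃ k : Fin 3, b k = true)
            ∧ ∀ k : Fin 3,
                v (var j k) (if b k then pol j k else !(pol j k)) = 1 := by
  exact olive_np_hardness_core_equivalence_general ℝ var pol
end
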